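/- arXiv:2003.02513 — 2 statements merged into one kernel-verified Lean document; each statement's English description precedes it below -/
import Mathlib

section
/- Fix a dataset (r_j, a_j) ∈ ℝ × ℝ^m, j = 1,…,n, with |r_j| ≤ r̄ and ‖a_j‖_∞ ≤ ā for all j, let d ∈ ℝ^m satisfy 0 < d̲ ≤ d_i ≤ d̄ for all i, and assume the data are in general position: for every p ∈ ℝ^m there are at most m indices j with r_j = a_jᵀp. Let σ be a uniformly random permutation of {1,…,n}, let R_s*(σ) denote the optimal value of the scaled LP: maximize Σ_{j=1}^s r_{σ(j)} x_j over x ∈ [0,1]^s subject to Σ_{j=1}^s a_{i,σ(j)} x_j ≤ s·d_i for i = 1,…,m, and let R_n* be the optimal value of the full LP (the case s = n, which does not depend on σ). Then for every integer s with max{16ā², e^{16ā²}, e} < s ≤ n: (1/s)·E[R_s*(σ)] ≥ (1/n)·R_n* − m·r̄/n − r̄·log s/(d̲·√s) − m·r̄/s, where the expectation is the average over all n! permutations σ. -/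
/-- Optimal value of the LP `max Σ_j r_j x_j  s.t.  Σ_j a_{ij} x_j ≤ b_i, x ∈ [0,1]ⁿ`,
as the supremum of the objective over the feasible set. -/
noncomputable def LPval (n m : ℕ) (r : Fin n → ℝ) (a : Fin n → Fin m → ℝ)
    (b : Fin m → ℝ) : ℝ :=
  sSup ((fun x : Fin n → ℝ => ∑ j, r j * x j) ''
    {x | (∀ j, 0 ≤ x j ∧ x j ≤ 1) ∧ ∀ i, ∑ j, a j i * x j ≤ b i})

/-!
Take `x` feasible for the full LP. Its restriction to a random prefix is scored, on average,
exactly like `x` itself, and uses resource `i` at a rate that concentrates around at most `d i`.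
On the event that no resource exceeds `s * d i + t`, scaling the restriction by
`s * dlb / (s * dlb + t)` makes it feasible for the prefix LP at a loss of at most
`rbar * t / dlb`; off this event the trivial bound `0 ≤ LPval` loses at most `s * rbar`. The bad
event is controlled by Hoeffding's inequality for sampling without replacement, which follows from
the one for sampling with replacement because `𝔼 σ, ∏ j ∈ T, y (σ j) ≤ (𝔼 i, y i) ^ #T` for
nonnegative `y`. With `t = √s * log s` the bad event has probability at most `m / s`.
-/

section SamplingWithoutReplacement

open Finset Equiv
open scoped BigOperators

lemma prod_mul_swap_apply {α : Type*} [DecidableEq α] {T : Finset α} {i k : α} (hi : i ∉ T)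
    (hk : k ∉ T) (y : α → ℝ) (σ : Perm α) : ∏ j ∈ T, y ((σ * swap i k) j) = ∏ j ∈ T, y (σ j) := by
  refine prod_congr rfl fun j hj => ?_
  rw [Perm.mul_apply, swap_apply_of_ne_of_ne (ne_of_mem_of_not_mem hj hi)
    (ne_of_mem_of_not_mem hj hk)]

variable {α : Type*} [Fintype α]

lemma integral_uniformOfFintype [Nonempty α] [MeasurableSpace α] [MeasurableSingletonClass α]
    (f : α → ℝ) : ∫ i, f i ∂(PMF.uniformOfFintype α).toMeasure = 𝔼 i, f i := by
  rw [PMF.integral_eq_sum, Fintype.expect_eq_sum_div_card, sum_div]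
  simp [inv_mul_eq_div]

lemma expect_exp_mul_sub_le {c : α → ℝ} {u v D l : ℝ} (hc : ∀ j, c j ∈ Set.Icc u v)
    (hl : 0 ≤ l) (hD : 𝔼 j, c j ≤ D) :
    𝔼 j, Real.exp (l * (c j - D)) ≤ Real.exp (l ^ 2 * (v - u) ^ 2 / 8) := by
  cases isEmpty_or_nonempty α
  · simp [Real.exp_nonneg]
  let : MeasurableSpace α := ⊤
  have subgaussian := ProbabilityTheory.hasSubgaussianMGF_of_mem_Icc
    (μ := (PMF.uniformOfFintype α).toMeasure) (X := c) (measurable_of_finite c).aemeasurable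
    (.of_forall hc)
  have mgf_le := subgaussian.mgf_le l
  simp only [ProbabilityTheory.mgf, integral_uniformOfFintype] at mgf_le
  calc 𝔼 j, Real.exp (l * (c j - D))
      ≤ 𝔼 j, Real.exp (l * (c j - 𝔼 j, c j)) := by
        refine expect_le_expect fun j _ => ?_
        gcongr
    _ ≤ Real.exp (l ^ 2 * (v - u) ^ 2 / 8) := by
        refine mgf_le.trans_eq ?_
        congr 1
        rw [NNReal.coe_pow, NNReal.coe_div, coe_nnnorm, NNReal.coe_ofNat, div_pow, Real.norm_eq_abs,
          sq_abs]
        ring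

variable [DecidableEq α]

lemma expect_perm_mul_right (τ : Perm α) (F : Perm α → ℝ) : 𝔼 σ, F (σ * τ) = 𝔼 σ, F σ :=
  Fintype.expect_equiv (Equiv.mulRight τ) _ _ fun _ => rfl

lemma expect_perm_apply (f : α → ℝ) (k : α) : 𝔼 σ : Perm α, f (σ k) = 𝔼 i, f i := by
  have : Nonempty α := ⟨k⟩
  have apply_eq (i : α) : 𝔼 σ : Perm α, f (σ i) = 𝔼 σ : Perm α, f (σ k) := by
    simpa using expect_perm_mul_right (swap i k) fun σ => f (σ k)
  calc 𝔼 σ : Perm α, f (σ k)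
      = 𝔼 i, 𝔼 σ : Perm α, f (σ i) := by simp only [apply_eq, Fintype.expect_const]
    _ = 𝔼 σ : Perm α, 𝔼 i, f (σ i) := expect_comm _ _ _
    _ = 𝔼 _σ : Perm α, 𝔼 i, f i :=
        expect_congr rfl fun σ _ => Fintype.expect_equiv σ _ _ fun _ => rfl
    _ = 𝔼 i, f i := Fintype.expect_const _

lemma expect_perm_sum (f : α → ℝ) (T : Finset α) :
    𝔼 σ : Perm α, ∑ j ∈ T, f (σ j) = #T * 𝔼 i, f i := by
  simp [expect_sum_comm, expect_perm_apply]

lemma expect_perm_prod_mul_le {y : α → ℝ} (hy : ∀ i, 0 ≤ y i) {T : Finset α} {k : α} (hk : k ∉ T)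
    (i : α) :
    𝔼 σ : Perm α, (∏ j ∈ T, y (σ j)) * y (σ k) ≤ 𝔼 σ : Perm α, (∏ j ∈ T, y (σ j)) * y (σ i) := by
  by_cases hi : i ∈ T
  -- Exchanging `σ i` and `σ k` preserves `Q`, so bounding `y (σ i) * y (σ k)` by AM-GM suffices.
  · set Q : Perm α → ℝ := fun σ => ∏ j ∈ T.erase i, y (σ j)
    have prod_eq (σ : Perm α) : ∏ j ∈ T, y (σ j) = y (σ i) * Q σ :=
      (mul_prod_erase T (fun j => y (σ j)) hi).symm
    have Q_nonneg (σ : Perm α) : 0 ≤ Q σ := prod_nonneg fun j _ => hy _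
    have swap_sq : 𝔼 σ, Q σ * y (σ k) ^ 2 = 𝔼 σ, Q σ * y (σ i) ^ 2 := by
      rw [← expect_perm_mul_right (swap i k) fun σ => Q σ * y (σ i) ^ 2]
      refine expect_congr rfl fun σ _ => ?_
      have : Q (σ * swap i k) = Q σ := prod_mul_swap_apply (by simp) (by simp [hk]) y σ
      simp [this]
    calc 𝔼 σ : Perm α, (∏ j ∈ T, y (σ j)) * y (σ k)
        ≤ 𝔼 σ, (Q σ * y (σ k) ^ 2 + Q σ * y (σ i) ^ 2) / 2 := by
          refine expect_le_expect fun σ _ => ?_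
          rw [prod_eq]
          linarith [mul_nonneg (Q_nonneg σ) (sq_nonneg (y (σ i) - y (σ k)))]
      _ = 𝔼 σ, Q σ * y (σ i) ^ 2 := by
          rw [← expect_div, expect_add_distrib, swap_sq, add_self_div_two]
      _ = 𝔼 σ : Perm α, (∏ j ∈ T, y (σ j)) * y (σ i) :=
          expect_congr rfl fun σ _ => by rw [prod_eq]; ring
  · rw [← expect_perm_mul_right (swap i k)]
    simp only [prod_mul_swap_apply hi hk]
    simp only [Perm.mul_apply, swap_apply_right, le_refl]

lemma expect_perm_prod_mul_le_mul_expect {y : α → ℝ} (hy : ∀ i, 0 ≤ y i) {T : Finset α} {k : α}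
    (hk : k ∉ T) :
    𝔼 σ : Perm α, (∏ j ∈ T, y (σ j)) * y (σ k)
      ≤ (𝔼 σ : Perm α, ∏ j ∈ T, y (σ j)) * 𝔼 i, y i :=
  calc 𝔼 σ : Perm α, (∏ j ∈ T, y (σ j)) * y (σ k)
      ≤ 𝔼 i, 𝔼 σ : Perm α, (∏ j ∈ T, y (σ j)) * y (σ i) :=
        le_expect ⟨k, mem_univ k⟩ fun i _ => expect_perm_prod_mul_le hy hk i
    _ = 𝔼 σ : Perm α, (∏ j ∈ T, y (σ j)) * 𝔼 i, y (σ i) := by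
        rw [expect_comm]
        simp only [mul_expect]
    _ = (𝔼 σ : Perm α, ∏ j ∈ T, y (σ j)) * 𝔼 i, y i := by
        rw [expect_mul]
        exact expect_congr rfl fun σ _ => by rw [Fintype.expect_equiv σ _ y fun _ => rfl]

lemma expect_perm_prod_le_pow {y : α → ℝ} (hy : ∀ i, 0 ≤ y i) (T : Finset α) :
    𝔼 σ : Perm α, ∏ j ∈ T, y (σ j) ≤ (𝔼 i, y i) ^ #T := by
  induction T using Finset.induction_on with
  | empty => simp
  | insert k T hk ih =>
    calc 𝔼 σ : Perm α, ∏ j ∈ insert k T, y (σ j)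
        = 𝔼 σ : Perm α, (∏ j ∈ T, y (σ j)) * y (σ k) := by simp only [prod_insert hk, mul_comm]
      _ ≤ (𝔼 σ : Perm α, ∏ j ∈ T, y (σ j)) * 𝔼 i, y i := expect_perm_prod_mul_le_mul_expect hy hk
      _ ≤ (𝔼 i, y i) ^ #T * 𝔼 i, y i := by
          gcongr
          exact expect_nonneg fun i _ => hy i
      _ = (𝔼 i, y i) ^ #(insert k T) := by rw [card_insert_of_notMem hk, pow_succ]

lemma expect_perm_indicator_le_exp {c : α → ℝ} {u v D l : ℝ} (hc : ∀ j, c j ∈ Set.Icc u v)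
    (hl : 0 ≤ l) (hD : 𝔼 j, c j ≤ D) (T : Finset α) (t : ℝ) :
    𝔼 σ : Perm α, (if #T * D + t ≤ ∑ j ∈ T, c (σ j) then (1 : ℝ) else 0)
      ≤ Real.exp (#T * (l ^ 2 * (v - u) ^ 2 / 8) - l * t) := by
  have markov (σ : Perm α) : (if #T * D + t ≤ ∑ j ∈ T, c (σ j) then (1 : ℝ) else 0)
      ≤ (∏ j ∈ T, Real.exp (l * (c (σ j) - D))) * Real.exp (-(l * t)) := by
    rw [← Real.exp_sum, ← Real.exp_add, ← mul_sum, sum_sub_distrib, sum_const, nsmul_eq_mul]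
    split_ifs with h
    · refine Real.one_le_exp ?_
      nlinarith
    · positivity
  calc _ ≤ 𝔼 σ : Perm α, (∏ j ∈ T, Real.exp (l * (c (σ j) - D))) * Real.exp (-(l * t)) :=
        expect_le_expect fun σ _ => markov σ
    _ = (𝔼 σ : Perm α, ∏ j ∈ T, Real.exp (l * (c (σ j) - D))) * Real.exp (-(l * t)) :=
        (expect_mul _ _ _).symm
    _ ≤ (𝔼 j, Real.exp (l * (c j - D))) ^ #T * Real.exp (-(l * t)) := by
        gcongr
        exact expect_perm_prod_le_pow (fun i => Real.exp_nonneg (l * (c i - D))) T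
    _ ≤ Real.exp (l ^ 2 * (v - u) ^ 2 / 8) ^ #T * Real.exp (-(l * t)) := by
        gcongr
        exact expect_exp_mul_sub_le hc hl hD
    _ = Real.exp (#T * (l ^ 2 * (v - u) ^ 2 / 8) - l * t) := by
        rw [← Real.exp_nat_mul, ← Real.exp_add, ← sub_eq_add_neg]

-- For `#T = 0` or `u = v` the exponent is `0` by the convention `x / 0 = 0`.
theorem hoeffding_expect_perm {c : α → ℝ} {u v D t : ℝ} (hc : ∀ j, c j ∈ Set.Icc u v)
    (hD : 𝔼 j, c j ≤ D) (T : Finset α) (ht : 0 ≤ t) :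
    𝔼 σ : Perm α, (if #T * D + t ≤ ∑ j ∈ T, c (σ j) then (1 : ℝ) else 0)
      ≤ Real.exp (-(2 * t ^ 2) / (#T * (v - u) ^ 2)) := by
  set w : ℝ := #T * (v - u) ^ 2
  have hw : 0 ≤ w := by positivity
  refine (expect_perm_indicator_le_exp hc (l := 4 * t / w) (by positivity) hD T t).trans_eq ?_
  congr 1
  rw [show #T * ((4 * t / w) ^ 2 * (v - u) ^ 2 / 8) = (4 * t / w) ^ 2 * w / 8 by ring]
  rcases hw.eq_or_lt with hw | hw
  · simp [← hw]
  · field_simp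
    ring

end SamplingWithoutReplacement

section LinearProgram

variable {n m : ℕ} {r : Fin n → ℝ} {a : Fin n → Fin m → ℝ} {b : Fin m → ℝ}

/-- The feasible set of the LP whose optimal value is `LPval n m r a b`. -/
def LPfeasible (a : Fin n → Fin m → ℝ) (b : Fin m → ℝ) : Set (Fin n → ℝ) :=
  {x | (∀ j, 0 ≤ x j ∧ x j ≤ 1) ∧ ∀ i, ∑ j, a j i * x j ≤ b i}

lemma sum_mul_le_card_mul {x : Fin n → ℝ} {R : ℝ} (hR : 0 ≤ R) (hr : ∀ j, r j ≤ R)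
    (hx : ∀ j, 0 ≤ x j ∧ x j ≤ 1) : ∑ j, r j * x j ≤ n * R :=
  calc ∑ j, r j * x j ≤ ∑ _j : Fin n, R :=
        Finset.sum_le_sum fun j _ => (mul_le_mul_of_nonneg_right (hr j) (hx j).1).trans
          (mul_le_of_le_one_right hR (hx j).2)
    _ = n * R := by simp

lemma sum_mul_le_LPval {x : Fin n → ℝ} (hx : x ∈ LPfeasible a b) :
    ∑ j, r j * x j ≤ LPval n m r a b := by
  refine le_csSup ⟨n * ∑ j, |r j|, ?_⟩ ⟨x, hx, rfl⟩
  rintro _ ⟨z, ⟨hz, -⟩, rfl⟩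
  refine sum_mul_le_card_mul (by positivity) (fun j => ?_) hz
  exact (le_abs_self _).trans
    (Finset.single_le_sum (f := fun j => |r j|) (fun k _ => abs_nonneg (r k)) (Finset.mem_univ j))

lemma zero_mem_LPfeasible (hb : 0 ≤ b) : 0 ∈ LPfeasible a b :=
  ⟨by simp, fun i => by simpa using hb i⟩

lemma LPval_nonneg (hb : 0 ≤ b) : 0 ≤ LPval n m r a b := by
  simpa using sum_mul_le_LPval (r := r) (zero_mem_LPfeasible (a := a) hb)

lemma LPval_le (hb : 0 ≤ b) {C : ℝ} (hC : ∀ x ∈ LPfeasible a b, ∑ j, r j * x j ≤ C) :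
    LPval n m r a b ≤ C :=
  csSup_le ⟨_, 0, zero_mem_LPfeasible hb, rfl⟩ (Set.forall_mem_image.2 hC)

lemma smul_mem_LPfeasible {x : Fin n → ℝ} {β t : ℝ} (hβ : 0 < β) (hb : ∀ i, β ≤ b i) (ht : 0 ≤ t)
    (hx : x ∈ LPfeasible a fun i => b i + t) : (β / (β + t)) • x ∈ LPfeasible a b := by
  have scale_le_one : β / (β + t) ≤ 1 := div_le_one_of_le₀ (by linarith) (by positivity)
  refine ⟨fun j => ⟨mul_nonneg (by positivity) (hx.1 j).1,
    mul_le_one₀ scale_le_one (hx.1 j).1 (hx.1 j).2⟩, fun i => ?_⟩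
  calc ∑ j, a j i * (β / (β + t) * x j) = β / (β + t) * ∑ j, a j i * x j :=
        dotProduct_smul (β / (β + t)) (fun j => a j i) x
    _ ≤ β / (β + t) * (b i + t) := mul_le_mul_of_nonneg_left (hx.2 i) (by positivity)
    _ ≤ b i := by
        rw [div_mul_eq_mul_div, div_le_iff₀ (by positivity)]
        nlinarith [mul_le_mul_of_nonneg_right (hb i) ht]

lemma sum_mul_sub_le_LPval {x : Fin n → ℝ} {R β t : ℝ} (hR : 0 ≤ R) (hr : ∀ j, r j ≤ R)
    (hβ : 0 < β) (hb : ∀ i, β ≤ b i) (ht : 0 ≤ t) (hx : x ∈ LPfeasible a fun i => b i + t) :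
    ∑ j, r j * x j - n * R * (t / β) ≤ LPval n m r a b := by
  have loss : (1 - β / (β + t)) * ∑ j, r j * x j ≤ n * R * (t / β) :=
    calc (1 - β / (β + t)) * ∑ j, r j * x j = t / (β + t) * ∑ j, r j * x j := by
          congr 1
          field_simp
          ring
      _ ≤ t / (β + t) * (n * R) := by
          gcongr
          exact sum_mul_le_card_mul hR hr hx.1
      _ ≤ t / β * (n * R) := by
          gcongr
          linarith
      _ = n * R * (t / β) := mul_comm _ _
  have scaled_value : ∑ j, r j * (β / (β + t) * x j) = β / (β + t) * ∑ j, r j * x j :=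
    dotProduct_smul (β / (β + t)) r x
  have scaled_le : β / (β + t) * ∑ j, r j * x j ≤ LPval n m r a b :=
    scaled_value.symm.trans_le (sum_mul_le_LPval (smul_mem_LPfeasible hβ hb ht hx))
  linarith

lemma sum_mul_sub_sub_le_LPval {x : Fin n → ℝ} {R β t : ℝ} (hR : 0 ≤ R) (hr : ∀ j, r j ≤ R)
    (hβ : 0 < β) (hb : ∀ i, β ≤ b i) (ht : 0 ≤ t) (hx : ∀ j, 0 ≤ x j ∧ x j ≤ 1) :
    ∑ j, r j * x j - n * R * (t / β)
        - n * R * ∑ i, (if b i + t ≤ ∑ j, a j i * x j then (1 : ℝ) else 0)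
      ≤ LPval n m r a b := by
  have indicator_nonneg (i : Fin m) :
      0 ≤ if b i + t ≤ ∑ j, a j i * x j then (1 : ℝ) else 0 := by positivity
  by_cases violated : ∃ i, b i + t ≤ ∑ j, a j i * x j
  · obtain ⟨i, hi⟩ := violated
    have one_le : 1 ≤ ∑ i, (if b i + t ≤ ∑ j, a j i * x j then (1 : ℝ) else 0) := by
      simpa [hi] using Finset.single_le_sum (fun k _ => indicator_nonneg k) (Finset.mem_univ i)
    have value_le := sum_mul_le_card_mul hR hr hx
    have card_le := le_mul_of_one_le_right (by positivity : 0 ≤ n * R) one_le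
    have loss_nonneg : 0 ≤ n * R * (t / β) := by positivity
    have LPval_nonneg : 0 ≤ LPval n m r a b := LPval_nonneg fun i => hβ.le.trans (hb i)
    linarith
  · push Not at violated
    have value_le := sum_mul_sub_le_LPval hR hr hβ hb ht ⟨hx, fun i => (violated i).le⟩
    have := mul_nonneg (by positivity : 0 ≤ n * R)
      (Finset.sum_nonneg fun i (_ : i ∈ Finset.univ) => indicator_nonneg i)
    linarith

end LinearProgram

section RandomPrefix

open Finset Equiv
open scoped BigOperators

variable {n m s : ℕ} {r : Fin n → ℝ} {a : Fin n → Fin m → ℝ} {d : Fin m → ℝ} {R A δ t : ℝ}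

lemma expect_perm_violation_le {c x : Fin n → ℝ} {D : ℝ} (hc : ∀ j, |c j| ≤ A)
    (hx : ∀ j, 0 ≤ x j ∧ x j ≤ 1) (hD : 𝔼 j, c j * x j ≤ D) (ht : 0 ≤ t) (e : Fin s ↪ Fin n) :
    𝔼 σ : Perm (Fin n),
        (if s * D + t ≤ ∑ j, c (σ (e j)) * x (σ (e j)) then (1 : ℝ) else 0)
      ≤ Real.exp (-t ^ 2 / (2 * s * A ^ 2)) := by
  have mem_Icc (j : Fin n) : c j * x j ∈ Set.Icc (-A) A := by
    rw [Set.mem_Icc, ← abs_le, abs_mul, abs_of_nonneg (hx j).1]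
    exact (mul_le_of_le_one_right (abs_nonneg _) (hx j).2).trans (hc j)
  have exponent_eq : -(2 * t ^ 2) / (s * (A - -A) ^ 2) = -t ^ 2 / (2 * s * A ^ 2) := by
    rw [show -(2 * t ^ 2) = 2 * -t ^ 2 by ring,
      show s * (A - -A) ^ 2 = 2 * (2 * s * A ^ 2) by ring, mul_div_mul_left _ _ two_ne_zero]
  rw [← exponent_eq]
  simpa using hoeffding_expect_perm mem_Icc hD (univ.map e) ht

lemma expect_sub_le_expect_LPval (hs : 0 < s) (hR : 0 ≤ R) (hr : ∀ j, r j ≤ R)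
    (ha : ∀ j i, |a j i| ≤ A) (hδ : 0 < δ) (hd : ∀ i, δ ≤ d i) (ht : 0 ≤ t) (e : Fin s ↪ Fin n)
    {x : Fin n → ℝ} (hx : x ∈ LPfeasible a fun i => n * d i) :
    s * 𝔼 j, r j * x j - R * (t / δ) - s * R * (m * Real.exp (-t ^ 2 / (2 * s * A ^ 2)))
      ≤ 𝔼 σ : Perm (Fin n),
          LPval s m (fun j => r (σ (e j))) (fun j => a (σ (e j))) (fun i => s * d i) := by
  set violation : Perm (Fin n) → Fin m → ℝ := fun σ i =>
    if s * d i + t ≤ ∑ j, a (σ (e j)) i * x (σ (e j)) then 1 else 0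
  have pointwise (σ : Perm (Fin n)) :
      ∑ j, r (σ (e j)) * x (σ (e j)) - R * (t / δ) - s * R * ∑ i, violation σ i
        ≤ LPval s m (fun j => r (σ (e j))) (fun j => a (σ (e j))) (fun i => s * d i) := by
    have slack : s * R * (t / (s * δ)) = R * (t / δ) := by field_simp
    rw [← slack]
    exact sum_mul_sub_sub_le_LPval hR (fun j => hr _) (by positivity)
      (fun i => mul_le_mul_of_nonneg_left (hd i) (by positivity)) ht fun j => hx.1 _
  have value : 𝔼 σ : Perm (Fin n), ∑ j, r (σ (e j)) * x (σ (e j)) = s * 𝔼 j, r j * x j := by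
    simpa using expect_perm_sum (fun j => r j * x j) (univ.map e)
  have hn : 0 < n := (e ⟨0, hs⟩).pos
  have usage_le (i : Fin m) : 𝔼 j, a j i * x j ≤ d i := by
    rw [Fintype.expect_eq_sum_div_card, Fintype.card_fin, div_le_iff₀' (Nat.cast_pos.2 hn)]
    exact hx.2 i
  have violation_le : 𝔼 σ, ∑ i, violation σ i ≤ m * Real.exp (-t ^ 2 / (2 * s * A ^ 2)) := by
    rw [expect_sum_comm]
    refine (sum_le_card_nsmul _ _ _ fun i _ =>
      expect_perm_violation_le (fun j => ha j i) hx.1 (usage_le i) ht e).trans_eq ?_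
    simp
  calc _ ≤ s * 𝔼 j, r j * x j - R * (t / δ) - s * R * 𝔼 σ, ∑ i, violation σ i := by gcongr
    _ = 𝔼 σ : Perm (Fin n), (∑ j, r (σ (e j)) * x (σ (e j)) - R * (t / δ)
          - s * R * ∑ i, violation σ i) := by
        rw [expect_sub_distrib, expect_sub_distrib, value, Fintype.expect_const,
          ← mul_expect]
    _ ≤ _ := expect_le_expect fun σ _ => pointwise σ

theorem LPval_div_sub_le_expect_LPval_div (hs : 0 < s) (hR : 0 ≤ R) (hr : ∀ j, r j ≤ R)
    (ha : ∀ j i, |a j i| ≤ A) (hδ : 0 < δ) (hd : ∀ i, δ ≤ d i) (ht : 0 ≤ t) (e : Fin s ↪ Fin n) :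
    LPval n m r a (fun i => n * d i) / n - R * t / (δ * s)
        - m * R * Real.exp (-t ^ 2 / (2 * s * A ^ 2))
      ≤ (𝔼 σ : Perm (Fin n),
          LPval s m (fun j => r (σ (e j))) (fun j => a (σ (e j))) (fun i => s * d i)) / s := by
  set E := 𝔼 σ : Perm (Fin n),
    LPval s m (fun j => r (σ (e j))) (fun j => a (σ (e j))) (fun i => s * d i)
  set ε := Real.exp (-t ^ 2 / (2 * s * A ^ 2))
  have hn : 0 < n := (e ⟨0, hs⟩).pos
  have budget_nonneg : 0 ≤ fun i => n * d i := fun i =>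
    mul_nonneg n.cast_nonneg (hδ.le.trans (hd i))
  have value_le (x : Fin n → ℝ) (hx : x ∈ LPfeasible a fun i => n * d i) :
      ∑ j, r j * x j ≤ (E / s + R * t / (δ * s) + m * R * ε) * n := by
    have := expect_sub_le_expect_LPval hs hR hr ha hδ hd ht e hx
    rw [Fintype.expect_eq_sum_div_card, Fintype.card_fin] at this
    rw [← div_le_iff₀ (by positivity), ← mul_le_mul_iff_right₀ (Nat.cast_pos.2 hs : (0 : ℝ) < s)]
    calc s * ((∑ j, r j * x j) / n) ≤ E + R * (t / δ) + s * R * (m * ε) := by linarith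
      _ = s * (E / s + R * t / (δ * s) + m * R * ε) := by field_simp
  have := (div_le_iff₀ (by positivity)).2 (LPval_le budget_nonneg value_le)
  linarith

end RandomPrefix

theorem stmt8_general (m n : ℕ) (r : Fin n → ℝ) (a : Fin n → Fin m → ℝ) (d : Fin m → ℝ)
    (rbar abar dlb : ℝ) (hdlb : 0 < dlb) (hrbar : 0 ≤ rbar)
    (hr : ∀ j, r j ≤ rbar) (ha : ∀ j i, |a j i| ≤ abar) (hd : ∀ i, dlb ≤ d i)
    (s : ℕ) (hs : s ≤ n) (hs_exp : Real.exp (2 * abar ^ 2) ≤ s) :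
    (1 / (n : ℝ)) * LPval n m r a (fun i => (n : ℝ) * d i)
        - rbar * Real.log s / (dlb * Real.sqrt s) - m * rbar / s
      ≤ (1 / (s : ℝ)) *
          ((∑ σ : Equiv.Perm (Fin n),
              LPval s m (fun j => r (σ (Fin.castLE hs j)))
                (fun j i => a (σ (Fin.castLE hs j)) i) (fun i => (s : ℝ) * d i)) /
            (Nat.factorial n : ℝ)) := by
  have hs_pos : (0 : ℝ) < s := (Real.exp_pos _).trans_le hs_exp
  have hs_log : 2 * abar ^ 2 ≤ Real.log s := (Real.le_log_iff_exp_le hs_pos).2 hs_exp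
  have log_nonneg : 0 ≤ Real.log s := Real.log_natCast_nonneg s
  -- Replacing `abar` by the larger `√(log s / 2)` makes the Hoeffding tail exactly `1 / s`.
  have ha_log (j i) : |a j i| ≤ √(Real.log s / 2) :=
    (ha j i).trans (Real.le_sqrt_of_sq_le (by linarith))
  have tail : Real.exp (-(√s * Real.log s) ^ 2 / (2 * s * √(Real.log s / 2) ^ 2)) = 1 / s := by
    rw [mul_pow, Real.sq_sqrt hs_pos.le, Real.sq_sqrt (by positivity)]
    rw [show -(s * Real.log s ^ 2) / (2 * s * (Real.log s / 2)) = -Real.log s by field_simp]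
    rw [Real.exp_neg, Real.exp_log hs_pos, one_div]
  have loss : rbar * (√s * Real.log s) / (dlb * s) = rbar * Real.log s / (dlb * √s) := by
    rw [div_eq_div_iff (by positivity) (by positivity)]
    linear_combination (rbar * Real.log s * dlb) * Real.mul_self_sqrt hs_pos.le
  have := LPval_div_sub_le_expect_LPval_div (Nat.cast_pos.1 hs_pos) hrbar hr ha_log
    hdlb hd (mul_nonneg (Real.sqrt_nonneg s) log_nonneg) (Fin.castLEEmb hs)
  rw [tail, loss, Fintype.expect_eq_sum_div_card, Fintype.card_perm, Fintype.card_fin] at this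
  rw [one_div_mul_eq_div, one_div_mul_eq_div, ← mul_one_div (m * rbar)]
  exact this

/-- (Proposition 1 of the paper.) Under the random permutation model
with data in general position, for `max{16ā², e^{16ā²}, e} < s ≤ n`, the expected
optimal value of the prefix (scaled) LP of size `s` satisfies
`(1/s) E[R_s*(σ)] ≥ (1/n) R_n* − m r̄/n − r̄ log s/(d̲ √s) − m r̄/s`, the expectation
being the average over all `n!` permutations. -/
theorem stmt8 (m n : ℕ) (hm : 0 < m) (hn : 0 < n)
    (r : Fin n → ℝ) (a : Fin n → Fin m → ℝ) (d : Fin m → ℝ)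
    (rbar abar dlb dbar : ℝ) (hdlb : 0 < dlb)
    (hr : ∀ j, |r j| ≤ rbar) (ha : ∀ j i, |a j i| ≤ abar)
    (hd : ∀ i, dlb ≤ d i ∧ d i ≤ dbar)
    (hgen : ∀ p : Fin m → ℝ, {j | r j = ∑ i, a j i * p i}.ncard ≤ m)
    (s : ℕ) (hs : s ≤ n)
    (hslb : max (max (16 * abar ^ 2) (Real.exp (16 * abar ^ 2))) (Real.exp 1) < s) :
    (1 / (n : ℝ)) * LPval n m r a (fun i => (n : ℝ) * d i)
        - m * rbar / n - rbar * Real.log s / (dlb * Real.sqrt s) - m * rbar / s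
      ≤ (1 / (s : ℝ)) *
          ((∑ σ : Equiv.Perm (Fin n),
              LPval s m (fun j => r (σ (Fin.castLE hs j)))
                (fun j i => a (σ (Fin.castLE hs j)) i) (fun i => (s : ℝ) * d i)) /
            (Nat.factorial n : ℝ)) := by
  have hs_exp : Real.exp (16 * abar ^ 2) < s := (max_lt_iff.1 (max_lt_iff.1 hslb).1).2
  have hrbar : 0 ≤ rbar := (abs_nonneg _).trans (hr ⟨0, hn⟩)
  have := stmt8_general m n r a d rbar abar dlb hdlb hrbar
    (fun j => (le_abs_self _).trans (hr j)) ha (fun i => (hd i).1) s hs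
    ((Real.exp_le_exp.2 (by linarith [sq_nonneg abar])).trans hs_exp.le)
  linarith [show 0 ≤ m * rbar / n by positivity]
end

section
/- Fix a dataset (r_j, a_j) ∈ ℝ × ℝ^m, j = 1,…,n, with |r_j| ≤ r̄ and ‖a_j‖_∞ ≤ ā for all j, and let σ be a uniformly random permutation of {1,…,n}. Then for every t with 1 ≤ t ≤ n − 1, writing μ = min{t, n − t}: (1) E[ sup_{p ≥ 0} | (1/(n−t))·Σ_{j=t+1}^n r_{σ(j)}·1{r_{σ(j)} > a_{σ(j)}ᵀp} − (1/t)·Σ_{j=1}^t r_{σ(j)}·1{r_{σ(j)} > a_{σ(j)}ᵀp} | ] ≤ 4r̄/√μ + 2·√(2 r̄² m log n)/√μ; and (2) for every i = 1,…,m: E[ sup_{p ≥ 0} | (1/(n−t))·Σ_{j=t+1}^n a_{i,σ(j)}·1{r_{σ(j)} > a_{σ(j)}ᵀp} − (1/t)·Σ_{j=1}^t a_{i,σ(j)}·1{r_{σ(j)} > a_{σ(j)}ᵀp} | ] ≤ 4ā/√μ + 2·√(2 ā² m log n)/√μ. Expectations are averages over all n! permutations. -/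
/-!
Exchanging the two observations `x` and `y` flips the sign of `v (σ y) - v (σ x)` and preserves the
law of the uniform permutation `σ`, so a sum of such differences over disjoint pairs is as
sub-Gaussian as a Rademacher sum. When the first block is the smaller one, the gap between the two
block averages is an average, over permutations of the larger block, of paired sums of this kind,
hence sub-Gaussian by Jensen's inequality. Thresholding with a price selects the positivity set of
an affine functional of the price; the family of these sets has VC dimension at most that of the
price space, and Massart's maximal inequality over the at most `2 * n ^ m` selected sets
(Sauer–Shelah) gives the bound.
-/

open Finset Module
open scoped BigOperators

section Expectation

lemma expect_coe_sort {ι : Type*} (s : Finset ι) (f : ι → ℝ) : 𝔼 i : s, f i = 𝔼 i ∈ s, f i := by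
  rw [Fintype.expect_eq_sum_div_card, expect_eq_sum_div_card, sum_coe_sort, Fintype.card_coe]

lemma map_expect_le_expect_of_convexOn {ι : Type*} {s : Finset ι} (hs : s.Nonempty) {D : Set ℝ}
    {f : ℝ → ℝ} (hf : ConvexOn ℝ D f) {g : ι → ℝ} (hg : ∀ i ∈ s, g i ∈ D) :
    f (𝔼 i ∈ s, g i) ≤ 𝔼 i ∈ s, f (g i) := by
  have hcard : (#s : ℝ) ≠ 0 := by exact_mod_cast hs.card_ne_zero
  have jensen := hf.map_sum_le (t := s) (w := fun _ => 1 / (#s : ℝ)) (p := g)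
    (fun _ _ => by positivity) (by simp [hcard]) hg
  simpa [expect_eq_sum_div_card, ← mul_sum, div_eq_inv_mul] using jensen

lemma expect_exp_add_le_of_sign_flip {Ω : Type*} [Fintype Ω] (τ : Ω ≃ Ω) {f g : Ω → ℝ} {b : ℝ}
    (hf : ∀ ω, f (τ ω) = -f ω) (hg : ∀ ω, g (τ ω) = g ω) (hb : ∀ ω, |f ω| ≤ b) :
    𝔼 ω, Real.exp (f ω + g ω) ≤ Real.exp (b ^ 2 / 2) * 𝔼 ω, Real.exp (g ω) := by
  have flip : 𝔼 ω, Real.exp (f ω + g ω) = 𝔼 ω, Real.exp (-f ω + g ω) :=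
    (Fintype.expect_equiv τ _ _ fun ω => by rw [hf, hg]).symm
  calc 𝔼 ω, Real.exp (f ω + g ω)
      = 𝔼 ω, Real.cosh (f ω) * Real.exp (g ω) := by
        have cosh_eq : ∀ ω, Real.cosh (f ω) * Real.exp (g ω) =
            (Real.exp (f ω + g ω) + Real.exp (-f ω + g ω)) / 2 := fun ω => by
          rw [Real.cosh_eq, Real.exp_add, Real.exp_add]; ring
        simp only [cosh_eq, ← expect_div, expect_add_distrib, ← flip, add_self_div_two]
    _ ≤ 𝔼 ω, Real.exp (b ^ 2 / 2) * Real.exp (g ω) := by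
        refine expect_le_expect fun ω _ => ?_
        have cosh_le : Real.cosh (f ω) ≤ Real.exp (b ^ 2 / 2) :=
          (Real.cosh_le_exp_half_sq _).trans <| Real.exp_le_exp.2 <| by
            rw [← sq_abs]; gcongr; exact hb ω
        gcongr
    _ = Real.exp (b ^ 2 / 2) * 𝔼 ω, Real.exp (g ω) := (mul_expect _ _ _).symm

end Expectation

section RandomPermutation

/-- The average of `v` over the observations that the ordering `σ` puts at the positions in `T`,
minus the average over those at the positions in `S`. An empty block has average `0`. -/
noncomputable def blockGap {α : Type*} (S T : Finset α) (v : α → ℝ) (σ : Equiv.Perm α) : ℝ :=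
  𝔼 j ∈ T, v (σ j) - 𝔼 j ∈ S, v (σ j)

lemma blockGap_eq_neg_blockGap {α : Type*} (S T : Finset α) (v : α → ℝ) (σ : Equiv.Perm α) :
    blockGap S T v σ = -blockGap T S v σ :=
  (neg_sub _ _).symm

variable {α : Type*} [DecidableEq α]

lemma expect_perm_apply_s13 [Fintype α] (g : α → ℝ) (x : α) :
    𝔼 π : Equiv.Perm α, g (π x) = 𝔼 y, g y := by
  have : Nonempty α := ⟨x⟩
  have indep : ∀ y, 𝔼 π : Equiv.Perm α, g (π y) = 𝔼 π : Equiv.Perm α, g (π x) := fun y =>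
    Fintype.expect_equiv (Equiv.mulRight (Equiv.swap x y)) _ _ fun π => by simp
  calc 𝔼 π : Equiv.Perm α, g (π x)
      = 𝔼 y, 𝔼 π : Equiv.Perm α, g (π y) := by simp only [indep, Fintype.expect_const]
    _ = 𝔼 π : Equiv.Perm α, 𝔼 y, g (π y) := expect_comm _ _ _
    _ = 𝔼 _π : Equiv.Perm α, 𝔼 y, g y :=
        expect_congr rfl fun π _ => Fintype.expect_equiv π _ _ fun _ => rfl
    _ = 𝔼 y, g y := Fintype.expect_const _

lemma blockGap_eq_expect_paired_sub {S T : Finset α} (hST : Disjoint S T) (hS : S.Nonempty)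
    (f : S ↪ T) (v : α → ℝ) (σ : Equiv.Perm α) :
    blockGap S T v σ = 𝔼 π : Equiv.Perm T, 𝔼 i : S,
      (v ((σ * Equiv.Perm.ofSubtype π) (f i)) - v ((σ * Equiv.Perm.ofSubtype π) i)) := by
  have : Nonempty S := hS.coe_sort
  have fixes_S : ∀ (π : Equiv.Perm T) (i : S), Equiv.Perm.ofSubtype π (i : α) = i := fun π i =>
    Equiv.Perm.ofSubtype_apply_of_not_mem π (disjoint_left.1 hST i.2)
  have average_T : ∀ i : S, 𝔼 π : Equiv.Perm T, v (σ (π (f i))) = 𝔼 j ∈ T, v (σ j) := fun i => by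
    rw [expect_perm_apply_s13 (fun j : T => v (σ j)) (f i),
      expect_coe_sort T fun j => v (σ j)]
  simp only [Equiv.Perm.mul_apply, Equiv.Perm.ofSubtype_apply_coe, fixes_S, expect_sub_distrib,
    Fintype.expect_const]
  rw [expect_comm]
  simp only [average_T, Fintype.expect_const, blockGap, expect_coe_sort S fun j => v (σ j)]

variable [Fintype α]

lemma expect_exp_sum_paired_sub_le {ι : Type*} {x y : ι → α} (hx : x.Injective)
    (hy : y.Injective) (hxy : ∀ i j, x i ≠ y j) {v : α → ℝ} {R : ℝ} (hv : ∀ j, |v j| ≤ R)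
    (c : ℝ) (A : Finset ι) :
    𝔼 σ : Equiv.Perm α, Real.exp (∑ i ∈ A, c * (v (σ (y i)) - v (σ (x i)))) ≤
      Real.exp (#A * (2 * c ^ 2 * R ^ 2)) := by
  classical
  induction A using Finset.induction_on with
  | empty => simp
  | insert i A hi ih =>
    have other_pairs_fixed : ∀ σ : Equiv.Perm α,
        ∑ k ∈ A, c * (v ((σ * Equiv.swap (x i) (y i)) (y k)) -
            v ((σ * Equiv.swap (x i) (y i)) (x k))) =
          ∑ k ∈ A, c * (v (σ (y k)) - v (σ (x k))) := fun σ =>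
      sum_congr rfl fun k hk => by
        have hki : k ≠ i := ne_of_mem_of_not_mem hk hi
        rw [Equiv.Perm.mul_apply, Equiv.Perm.mul_apply,
          Equiv.swap_apply_of_ne_of_ne (hxy i k).symm (hy.ne hki),
          Equiv.swap_apply_of_ne_of_ne (hx.ne hki) (hxy k i)]
    have pair_bound : ∀ σ : Equiv.Perm α,
        |c * (v (σ (y i)) - v (σ (x i)))| ≤ |c| * (2 * R) := fun σ => by
      rw [abs_mul]
      gcongr
      linarith [abs_sub (v (σ (y i))) (v (σ (x i))), hv (σ (y i)), hv (σ (x i))]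
    simp only [sum_insert hi]
    calc _ ≤ Real.exp ((|c| * (2 * R)) ^ 2 / 2) *
            𝔼 σ : Equiv.Perm α, Real.exp (∑ k ∈ A, c * (v (σ (y k)) - v (σ (x k)))) :=
          expect_exp_add_le_of_sign_flip (Equiv.mulRight (Equiv.swap (x i) (y i)))
            (fun σ => by simp; ring) other_pairs_fixed pair_bound
      _ ≤ Real.exp ((|c| * (2 * R)) ^ 2 / 2) * Real.exp (#A * (2 * c ^ 2 * R ^ 2)) := by gcongr
      _ = Real.exp (#(insert i A) * (2 * c ^ 2 * R ^ 2)) := by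
          rw [← Real.exp_add, card_insert_of_notMem hi, mul_pow, sq_abs]
          push_cast
          ring_nf

lemma expect_exp_mul_blockGap_le_of_card_le {S T : Finset α} (hST : Disjoint S T)
    (hS : S.Nonempty) (hcard : #S ≤ #T) {v : α → ℝ} {R : ℝ} (hv : ∀ j, |v j| ≤ R) (l : ℝ) :
    𝔼 σ, Real.exp (l * blockGap S T v σ) ≤ Real.exp (2 * R ^ 2 / #S * l ^ 2) := by
  have : (#S : ℝ) ≠ 0 := by exact_mod_cast hS.card_ne_zero
  obtain ⟨f⟩ : Nonempty (S ↪ T) := Function.Embedding.nonempty_of_card_le (by simpa using hcard)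
  let G : Equiv.Perm α → ℝ := fun σ => ∑ i : S, l / #S * (v (σ (f i)) - v (σ i))
  have gap_eq : ∀ σ, l * blockGap S T v σ =
      𝔼 π : Equiv.Perm T, G (σ * Equiv.Perm.ofSubtype π) := fun σ => by
    rw [blockGap_eq_expect_paired_sub hST hS f, mul_expect]
    refine expect_congr rfl fun π _ => ?_
    simp only [G, ← mul_sum]
    rw [Fintype.expect_eq_sum_div_card, Fintype.card_coe]
    ring
  calc 𝔼 σ, Real.exp (l * blockGap S T v σ)
      ≤ 𝔼 σ, 𝔼 π : Equiv.Perm T, Real.exp (G (σ * Equiv.Perm.ofSubtype π)) := by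
        simp only [gap_eq]
        exact expect_le_expect fun σ _ =>
          map_expect_le_expect_of_convexOn univ_nonempty convexOn_exp fun _ _ => Set.mem_univ _
    _ = 𝔼 π : Equiv.Perm T, 𝔼 σ, Real.exp (G (σ * Equiv.Perm.ofSubtype π)) := expect_comm _ _ _
    _ = 𝔼 _π : Equiv.Perm T, 𝔼 σ, Real.exp (G σ) := expect_congr rfl fun π _ =>
        Fintype.expect_equiv (Equiv.mulRight (Equiv.Perm.ofSubtype π)) _ _ fun _ => rfl
    _ = 𝔼 σ, Real.exp (G σ) := Fintype.expect_const _
    _ ≤ Real.exp (#(univ : Finset S) * (2 * (l / #S) ^ 2 * R ^ 2)) :=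
        expect_exp_sum_paired_sub_le Subtype.val_injective
          (Subtype.val_injective.comp f.injective)
          (fun i j => disjoint_left.1 hST i.2 |> ne_of_mem_of_not_mem (f j).2 |>.symm) hv _ _
    _ = Real.exp (2 * R ^ 2 / #S * l ^ 2) := by
        rw [card_univ, Fintype.card_coe]
        field_simp

lemma expect_exp_mul_blockGap_le {S T : Finset α} (hST : Disjoint S T) (hS : S.Nonempty)
    (hT : T.Nonempty) {v : α → ℝ} {R : ℝ} (hv : ∀ j, |v j| ≤ R) (l : ℝ) :
    𝔼 σ, Real.exp (l * blockGap S T v σ) ≤ Real.exp (2 * R ^ 2 / min (#S : ℝ) #T * l ^ 2) := by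
  rcases le_total (#S) #T with h | h
  · rw [min_eq_left (by exact_mod_cast h)]
    exact expect_exp_mul_blockGap_le_of_card_le hST hS h hv l
  · rw [min_eq_right (by exact_mod_cast h)]
    simpa [blockGap_eq_neg_blockGap S T] using
      expect_exp_mul_blockGap_le_of_card_le hST.symm hT h hv (-l)

end RandomPermutation

section MaximalInequality

lemma le_two_mul_sqrt_mul_of_forall_mul_le {x A B : ℝ} (hA : 0 ≤ A) (hB : 0 ≤ B)
    (h : ∀ l, 0 < l → l * x ≤ A + B * l ^ 2) : x ≤ 2 * √(A * B) := by
  rcases le_total x 0 with hx | hx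
  · exact hx.trans (by positivity)
  have nonneg_quadratic : ∀ l, 0 ≤ B * (l * l) + -x * l + A := fun l => by
    rcases le_or_gt l 0 with hl | hl
    · nlinarith [mul_nonneg hB (mul_self_nonneg l), mul_nonneg hx (neg_nonneg.2 hl)]
    · linarith [h l hl]
  have discrim_nonpos := discrim_le_zero nonneg_quadratic
  rw [discrim] at discrim_nonpos
  have half_le : x / 2 ≤ √(A * B) := Real.le_sqrt_of_sq_le (by linarith)
  linarith

variable {Ω ι : Type*} [Fintype Ω] [Nonempty Ω] {A : Finset ι} {X : ι → Ω → ℝ} {c : ℝ}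

lemma exp_mul_expect_sup'_abs_le (hA : A.Nonempty)
    (hX : ∀ i ∈ A, ∀ l, 𝔼 ω, Real.exp (l * X i ω) ≤ Real.exp (c * l ^ 2)) {l : ℝ} (hl : 0 ≤ l) :
    Real.exp (l * 𝔼 ω, A.sup' hA fun i => |X i ω|) ≤ 2 * #A * Real.exp (c * l ^ 2) := by
  have sup_le_sum : ∀ ω, Real.exp (l * A.sup' hA fun i => |X i ω|) ≤
      ∑ i ∈ A, (Real.exp (l * X i ω) + Real.exp (-l * X i ω)) := fun ω => by
    obtain ⟨i, hi, hsup⟩ := exists_mem_eq_sup' hA fun i => |X i ω|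
    calc Real.exp (l * A.sup' hA fun i => |X i ω|) = Real.exp |l * X i ω| := by
          rw [hsup, abs_mul, abs_of_nonneg hl]
      _ ≤ Real.exp (l * X i ω) + Real.exp (-l * X i ω) := by
          rw [neg_mul]; exact Real.exp_abs_le _
      _ ≤ _ := single_le_sum (f := fun i => Real.exp (l * X i ω) + Real.exp (-l * X i ω))
          (fun _ _ => by positivity) hi
  calc Real.exp (l * 𝔼 ω, A.sup' hA fun i => |X i ω|)
      ≤ 𝔼 ω, Real.exp (l * A.sup' hA fun i => |X i ω|) := by
        rw [mul_expect]
        exact map_expect_le_expect_of_convexOn univ_nonempty convexOn_exp fun _ _ => Set.mem_univ _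
    _ ≤ 𝔼 ω, ∑ i ∈ A, (Real.exp (l * X i ω) + Real.exp (-l * X i ω)) :=
        expect_le_expect fun ω _ => sup_le_sum ω
    _ = ∑ i ∈ A, (𝔼 ω, Real.exp (l * X i ω) + 𝔼 ω, Real.exp (-l * X i ω)) := by
        simp only [expect_sum_comm, expect_add_distrib]
    _ ≤ ∑ _i ∈ A, (Real.exp (c * l ^ 2) + Real.exp (c * l ^ 2)) :=
        sum_le_sum fun i hi => add_le_add (hX i hi l) (by simpa using hX i hi (-l))
    _ = 2 * #A * Real.exp (c * l ^ 2) := by rw [sum_const, nsmul_eq_mul]; ring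

theorem expect_sup'_abs_le_of_forall_expect_exp_le (hA : A.Nonempty) (hc : 0 ≤ c)
    (hX : ∀ i ∈ A, ∀ l, 𝔼 ω, Real.exp (l * X i ω) ≤ Real.exp (c * l ^ 2)) :
    𝔼 ω, A.sup' hA (fun i => |X i ω|) ≤ 2 * √(Real.log (2 * #A) * c) := by
  have hcard : (1 : ℝ) ≤ #A := by exact_mod_cast hA.card_pos
  refine le_two_mul_sqrt_mul_of_forall_mul_le (Real.log_nonneg (by linarith)) hc fun l hl => ?_
  rw [← Real.exp_le_exp, Real.exp_add, Real.exp_log (by positivity)]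
  exact exp_mul_expect_sup'_abs_le hA hX hl.le

end MaximalInequality

section VCDimension

lemma sum_Iic_choose_le_two_mul_pow {n : ℕ} (hn : 2 ≤ n) (d : ℕ) :
    ∑ k ∈ Iic d, n.choose k ≤ 2 * n ^ d := by
  rw [← Nat.range_succ_eq_Iic]
  induction d with
  | zero => simp
  | succ d ih =>
    calc ∑ k ∈ range (d + 1 + 1), n.choose k
        ≤ 2 * n ^ d + n ^ (d + 1) := by
          rw [sum_range_succ]
          exact add_le_add ih (Nat.choose_le_pow n (d + 1))
      _ ≤ n * n ^ d + n ^ (d + 1) := by gcongr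
      _ = 2 * n ^ (d + 1) := by ring

variable {α : Type*} [Fintype α] [DecidableEq α]

lemma card_le_two_mul_card_pow_of_vcDim_le (hα : 2 ≤ Fintype.card α) {𝒜 : Finset (Finset α)}
    {d : ℕ} (hd : 𝒜.vcDim ≤ d) : #𝒜 ≤ 2 * Fintype.card α ^ d :=
  calc #𝒜 ≤ #𝒜.shatterer := card_le_card_shatterer 𝒜
    _ ≤ ∑ k ∈ Iic 𝒜.vcDim, (Fintype.card α).choose k := card_shatterer_le_sum_vcDim
    _ ≤ ∑ k ∈ Iic d, (Fintype.card α).choose k :=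
        sum_le_sum_of_subset (Iic_subset_Iic.2 hd)
    _ ≤ 2 * Fintype.card α ^ d := sum_Iic_choose_le_two_mul_pow hα d

variable {𝕜 V : Type*} [Field 𝕜] [LinearOrder 𝕜] [AddCommGroup V] [Module 𝕜 V]

/-- The observations accepted at price `p`: those whose reward `r j` strictly exceeds the cost
`a j p` of the resources they consume. Consumption is encoded as a linear functional of the
price. -/
def thresholdSet (r : α → 𝕜) (a : α → Dual 𝕜 V) (p : V) : Finset α := {j | a j p < r j}

variable {r : α → 𝕜} {a : α → Dual 𝕜 V} {𝒜 : Finset (Finset α)}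

lemma linearIndepOn_of_shatters [IsStrictOrderedRing 𝕜] (h𝒜 : ∀ A ∈ 𝒜, ∃ p, thresholdSet r a p = A)
    {S : Finset α} (hS : 𝒜.Shatters S) : LinearIndepOn 𝕜 a (S : Set α) := by
  have exists_price : ∀ D : α → Prop, DecidablePred D →
      ∃ p, ∀ j ∈ S, a j p < r j ↔ D j := fun D _ => by
    obtain ⟨A, hA, hSA⟩ := hS (filter_subset D S)
    obtain ⟨p, rfl⟩ := h𝒜 A hA
    refine ⟨p, fun j hj => ?_⟩
    simpa [thresholdSet, hj] using Finset.ext_iff.1 hSA j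
  rw [linearIndepOn_finset_iff]
  intro c hc
  obtain ⟨p, hp⟩ := exists_price (fun j => 0 < c j) inferInstance
  obtain ⟨q, hq⟩ := exists_price (fun j => c j < 0) inferInstance
  -- Each term of `∑ c j * a j (q - p) = 0` is positive unless `c j = 0`.
  have pos_of_ne : ∀ j ∈ S, c j ≠ 0 → 0 < c j * a j (q - p) := fun j hj hcj => by
    rw [map_sub]
    rcases lt_or_gt_of_ne hcj with hneg | hpos
    · have hqp : a j q < a j p :=
        ((hq j hj).2 hneg).trans_le (not_lt.1 fun h => hneg.not_gt ((hp j hj).1 h))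
      exact mul_pos_of_neg_of_neg hneg (sub_neg.2 hqp)
    · have hpq : a j p < a j q :=
        ((hp j hj).2 hpos).trans_le (not_lt.1 fun h => hpos.not_gt ((hq j hj).1 h))
      exact mul_pos hpos (sub_pos.2 hpq)
  have nonneg : ∀ j ∈ S, 0 ≤ c j * a j (q - p) := fun j hj => by
    by_cases hcj : c j = 0
    · simp [hcj]
    · exact (pos_of_ne j hj hcj).le
  have sum_eq_zero : ∑ j ∈ S, c j * a j (q - p) = 0 := by
    simpa using LinearMap.congr_fun hc (q - p)
  intro j hj
  by_contra hcj
  exact (pos_of_ne j hj hcj).ne' ((sum_eq_zero_iff_of_nonneg nonneg).1 sum_eq_zero j hj)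

theorem vcDim_le_finrank [IsStrictOrderedRing 𝕜] [FiniteDimensional 𝕜 V]
    (h𝒜 : ∀ A ∈ 𝒜, ∃ p, thresholdSet r a p = A) : 𝒜.vcDim ≤ finrank 𝕜 V := by
  refine Finset.sup_le fun S hS => ?_
  have indep := linearIndepOn_of_shatters h𝒜 (mem_shatterer.1 hS)
  simpa [Subspace.dual_finrank_eq] using LinearIndependent.fintype_card_le_finrank indep

end VCDimension

section UniformDeviation

lemma two_mul_sqrt_log_mul_le {R n μ : ℝ} (hR : 0 ≤ R) (hn : 1 ≤ n) (hμ : 0 ≤ μ) (d : ℕ) :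
    2 * √(Real.log (4 * n ^ d) * (2 * R ^ 2 / μ)) ≤
      4 * R / √μ + 2 * √(2 * R ^ 2 * d * Real.log n) / √μ := by
  have hlogn : 0 ≤ Real.log n := Real.log_nonneg hn
  have log_four_le : Real.log 4 ≤ 2 := by
    rw [show (4 : ℝ) = 2 ^ 2 by norm_num, Real.log_pow]
    push_cast
    linarith [Real.log_two_lt_d9]
  have split_log : Real.log (4 * n ^ d) * (2 * R ^ 2 / μ) =
      (2 * R ^ 2 * Real.log 4 + 2 * R ^ 2 * d * Real.log n) / μ := by
    rw [Real.log_mul (by norm_num) (by positivity), Real.log_pow]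
    ring
  have sqrt_le : √(2 * R ^ 2 * Real.log 4 + 2 * R ^ 2 * d * Real.log n) ≤
      2 * R + √(2 * R ^ 2 * d * Real.log n) := by
    refine Real.sqrt_le_iff.2 ⟨by positivity, ?_⟩
    rw [add_sq, Real.sq_sqrt (by positivity)]
    nlinarith [mul_le_mul_of_nonneg_left log_four_le (sq_nonneg R),
      mul_nonneg hR (Real.sqrt_nonneg (2 * R ^ 2 * d * Real.log n))]
  calc 2 * √(Real.log (4 * n ^ d) * (2 * R ^ 2 / μ))
      = 2 * √(2 * R ^ 2 * Real.log 4 + 2 * R ^ 2 * d * Real.log n) / √μ := by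
        rw [split_log, Real.sqrt_div' _ hμ, mul_div_assoc]
    _ ≤ 2 * (2 * R + √(2 * R ^ 2 * d * Real.log n)) / √μ := by gcongr
    _ = 4 * R / √μ + 2 * √(2 * R ^ 2 * d * Real.log n) / √μ := by ring

variable {α : Type*} [Fintype α] [DecidableEq α] {S T : Finset α} {v : α → ℝ} {R : ℝ}

theorem expect_sup'_abs_blockGap_indicator_le (hST : Disjoint S T) (hS : S.Nonempty)
    (hT : T.Nonempty) (hv : ∀ j, |v j| ≤ R) {𝒜 : Finset (Finset α)} (h𝒜 : 𝒜.Nonempty) {d : ℕ}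
    (hd : 𝒜.vcDim ≤ d) :
    𝔼 σ, 𝒜.sup' h𝒜 (fun A => |blockGap S T ((A : Set α).indicator v) σ|) ≤
      4 * R / √(min (#S : ℝ) #T) +
        2 * √(2 * R ^ 2 * d * Real.log (Fintype.card α)) / √(min (#S : ℝ) #T) := by
  have hS_pos := hS.card_pos
  have hT_pos := hT.card_pos
  have two_le_card : 2 ≤ Fintype.card α :=
    calc 2 ≤ #S + #T := by lia
      _ = #(S ∪ T) := (card_union_of_disjoint hST).symm
      _ ≤ Fintype.card α := card_le_univ _
  have hR : 0 ≤ R := (abs_nonneg _).trans (hv hS.choose)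
  have indicator_le : ∀ (A : Finset α) j, |(A : Set α).indicator v j| ≤ R := fun A j =>
    (norm_indicator_le_norm_self v j).trans (hv j)
  have card_le : (2 * #𝒜 : ℝ) ≤ 4 * (Fintype.card α : ℝ) ^ d := by
    have := card_le_two_mul_card_pow_of_vcDim_le two_le_card hd
    exact_mod_cast (by lia : 2 * #𝒜 ≤ 4 * Fintype.card α ^ d)
  have : (0 : ℝ) < #𝒜 := by exact_mod_cast h𝒜.card_pos
  calc 𝔼 σ, 𝒜.sup' h𝒜 (fun A => |blockGap S T ((A : Set α).indicator v) σ|)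
      ≤ 2 * √(Real.log (2 * #𝒜) * (2 * R ^ 2 / min (#S : ℝ) #T)) :=
        expect_sup'_abs_le_of_forall_expect_exp_le h𝒜 (by positivity) fun A _ =>
          expect_exp_mul_blockGap_le hST hS hT (indicator_le A)
    _ ≤ 2 * √(Real.log (4 * (Fintype.card α : ℝ) ^ d) * (2 * R ^ 2 / min (#S : ℝ) #T)) := by
        gcongr
    _ ≤ _ := two_mul_sqrt_log_mul_le hR (by exact_mod_cast (by lia : 1 ≤ Fintype.card α))
        (by positivity) d

theorem stmt13_general {V : Type*} [AddCommGroup V] [Module ℝ V] [FiniteDimensional ℝ V]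
    (hST : Disjoint S T) (hS : S.Nonempty) (hT : T.Nonempty) (hv : ∀ j, |v j| ≤ R)
    (r : α → ℝ) (a : α → Dual ℝ V) {P : Set V} (hP : P.Nonempty) :
    𝔼 σ, sSup ((fun p => |blockGap S T ((thresholdSet r a p : Set α).indicator v) σ|) '' P) ≤
      4 * R / √(min (#S : ℝ) #T) +
        2 * √(2 * R ^ 2 * finrank ℝ V * Real.log (Fintype.card α)) / √(min (#S : ℝ) #T) := by
  obtain ⟨𝒜, h𝒜⟩ : ∃ 𝒜 : Finset (Finset α), (𝒜 : Set (Finset α)) = thresholdSet r a '' P :=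
    (Set.toFinite _).exists_finset_coe
  have h𝒜_nonempty : 𝒜.Nonempty := by rw [← coe_nonempty, h𝒜]; exact hP.image _
  have h𝒜_threshold : ∀ A ∈ 𝒜, ∃ p, thresholdSet r a p = A := fun A hA => by
    obtain ⟨p, -, hp⟩ := h𝒜 ▸ mem_coe.2 hA
    exact ⟨p, hp⟩
  have sSup_eq_sup' : ∀ σ,
      sSup ((fun p => |blockGap S T ((thresholdSet r a p : Set α).indicator v) σ|) '' P) =
        𝒜.sup' h𝒜_nonempty fun A => |blockGap S T ((A : Set α).indicator v) σ| := fun σ => by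
    rw [sup'_eq_csSup_image, h𝒜, Set.image_image]
  simp only [sSup_eq_sup']
  exact expect_sup'_abs_blockGap_indicator_le hST hS hT hv h𝒜_nonempty
    (vcDim_le_finrank h𝒜_threshold)

lemma card_filter_le_val (n t : ℕ) : #{j : Fin n | t ≤ (j : ℕ)} = n - t := by
  have := card_filter_add_card_filter_not (s := (univ : Finset (Fin n))) fun j => (j : ℕ) < t
  simp only [not_lt, Fin.card_filter_val_lt, card_univ, Fintype.card_fin] at this
  lia

lemma blockGap_prefix_suffix {n t : ℕ} (ht : t ≤ n) (v : Fin n → ℝ) (σ : Equiv.Perm (Fin n)) :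
    blockGap (univ.filter fun j : Fin n => (j : ℕ) < t)
        (univ.filter fun j : Fin n => t ≤ (j : ℕ)) v σ =
      1 / ((n : ℝ) - t) * ∑ j ∈ univ.filter (fun j : Fin n => t ≤ (j : ℕ)), v (σ j) -
        1 / (t : ℝ) * ∑ j ∈ univ.filter (fun j : Fin n => (j : ℕ) < t), v (σ j) := by
  rw [blockGap, expect_eq_sum_div_card, expect_eq_sum_div_card, card_filter_le_val,
    Fin.card_filter_val_lt, min_eq_right ht, Nat.cast_sub ht, one_div_mul_eq_div,
    one_div_mul_eq_div]

theorem sum_sSup_abs_prefix_suffix_div_factorial_le {m n t : ℕ} (ht : 0 < t) (htn : t < n)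
    (r : Fin n → ℝ) (a : Fin n → Fin m → ℝ) {v : Fin n → ℝ} {R : ℝ} (hv : ∀ j, |v j| ≤ R) :
    (∑ σ : Equiv.Perm (Fin n), sSup ((fun p : Fin m → ℝ =>
        |1 / ((n : ℝ) - t) * ∑ j ∈ univ.filter (fun j : Fin n => t ≤ (j : ℕ)),
            v (σ j) * (if ∑ i, a (σ j) i * p i < r (σ j) then 1 else 0) -
          1 / (t : ℝ) * ∑ j ∈ univ.filter (fun j : Fin n => (j : ℕ) < t),
            v (σ j) * (if ∑ i, a (σ j) i * p i < r (σ j) then 1 else 0)|) ''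
        {p | ∀ i, 0 ≤ p i})) / (n.factorial : ℝ) ≤
      4 * R / √(min (t : ℝ) (n - t)) +
        2 * √(2 * R ^ 2 * m * Real.log n) / √(min (t : ℝ) (n - t)) := by
  have hdisj : Disjoint (univ.filter fun j : Fin n => (j : ℕ) < t)
      (univ.filter fun j : Fin n => t ≤ (j : ℕ)) :=
    disjoint_filter.2 fun _ _ => not_le.2
  have hprefix : (univ.filter fun j : Fin n => (j : ℕ) < t).Nonempty := ⟨⟨0, by lia⟩, by simpa⟩
  have hsuffix : (univ.filter fun j : Fin n => t ≤ (j : ℕ)).Nonempty := ⟨⟨t, htn⟩, by simp⟩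
  have bound := stmt13_general hdisj hprefix hsuffix hv r
    (fun j => dotProductBilin ℝ ℝ (a j)) (P := {p | ∀ i, 0 ≤ p i}) ⟨0, fun _ => le_rfl⟩
  simpa only [blockGap_prefix_suffix htn.le, Fintype.expect_eq_sum_div_card, Fintype.card_perm,
    Fintype.card_fin, card_filter_le_val, Fin.card_filter_val_lt, min_eq_right htn.le,
    Nat.cast_sub htn.le, finrank_fin_fun, Set.indicator_apply, coe_filter, Set.mem_ofPred_eq,
    mem_univ, true_and, thresholdSet, dotProductBilin_apply_apply, dotProduct, mul_ite, mul_one,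
    mul_zero] using bound

end UniformDeviation

/-- (Proposition 2 of the paper, via permutational Rademacher
complexity.) Under a uniformly random ordering of the data, the per-period averages of
rewards (1) and of each resource consumption (2) induced by thresholding with any
nonnegative dual price `p` are uniformly (over `p ≥ 0`) close between the first `t` and
the last `n − t` observations; `μ = min{t, n−t}`, and expectations are averages over all
`n!` permutations. -/
theorem stmt13 (m n : ℕ) (r : Fin n → ℝ) (a : Fin n → Fin m → ℝ)
    (rbar abar : ℝ) (hr : ∀ j, |r j| ≤ rbar) (ha : ∀ j i, |a j i| ≤ abar)
    (t : ℕ) (ht1 : 1 ≤ t) (ht2 : t ≤ n - 1) :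
    ((∑ σ : Equiv.Perm (Fin n),
        sSup ((fun p : Fin m → ℝ =>
            |(1 / ((n : ℝ) - t)) * ∑ j ∈ Finset.univ.filter (fun j : Fin n => t ≤ (j : ℕ)),
                r (σ j) * (if (∑ i, a (σ j) i * p i) < r (σ j) then 1 else 0)
              - (1 / (t : ℝ)) * ∑ j ∈ Finset.univ.filter (fun j : Fin n => (j : ℕ) < t),
                r (σ j) * (if (∑ i, a (σ j) i * p i) < r (σ j) then 1 else 0)|) ''
          {p | ∀ i, 0 ≤ p i})) / (Nat.factorial n : ℝ)
      ≤ 4 * rbar / Real.sqrt (min t (n - t)) +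
          2 * Real.sqrt (2 * rbar ^ 2 * m * Real.log n) / Real.sqrt (min t (n - t))) ∧
    ∀ i₀ : Fin m,
      (∑ σ : Equiv.Perm (Fin n),
          sSup ((fun p : Fin m → ℝ =>
              |(1 / ((n : ℝ) - t)) * ∑ j ∈ Finset.univ.filter (fun j : Fin n => t ≤ (j : ℕ)),
                  a (σ j) i₀ * (if (∑ i, a (σ j) i * p i) < r (σ j) then 1 else 0)
                - (1 / (t : ℝ)) * ∑ j ∈ Finset.univ.filter (fun j : Fin n => (j : ℕ) < t),
                  a (σ j) i₀ * (if (∑ i, a (σ j) i * p i) < r (σ j) then 1 else 0)|) ''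
            {p | ∀ i, 0 ≤ p i})) / (Nat.factorial n : ℝ)
        ≤ 4 * abar / Real.sqrt (min t (n - t)) +
            2 * Real.sqrt (2 * abar ^ 2 * m * Real.log n) / Real.sqrt (min t (n - t)) := by
  have htn : t < n := by lia
  exact ⟨sum_sSup_abs_prefix_suffix_div_factorial_le ht1 htn r a hr, fun i₀ =>
    sum_sSup_abs_prefix_suffix_div_factorial_le ht1 htn r a (v := fun j => a j i₀) (ha · i₀)⟩
end
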